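/- arXiv:math/0703066 — 10 statements merged into one kernel-verified Lean document; each statement's English description precedes it below -/
import Mathlib

section
/- Let G be a finite nonabelian group containing a unique element of order 2. Then G is not (1 | 2,2)-generated; that is, there do not exist elements ℓ₁, ℓ₂, h₁, h₂ ∈ G with ℓ₁ and ℓ₂ of order 2, ℓ₁ℓ₂ · h₁h₂h₁⁻¹h₂⁻¹ = 1, and {ℓ₁, ℓ₂, h₁, h₂} generating G. -/
/-- A finite nonabelian group with a unique element of order 2 is not
`(1 | 2,2)`-generated. -/
theorem nonabelian_unique_involution_not_one_two_two_generated
    {G : Type*} [Group G] [Finite G]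
    (hna : ¬ ∀ a b : G, a * b = b * a)
    (huniq : ∃! x : G, orderOf x = 2) :
    ¬ ∃ l₁ l₂ h₁ h₂ : G,
        orderOf l₁ = 2 ∧ orderOf l₂ = 2 ∧
        l₁ * l₂ * (h₁ * h₂ * h₁⁻¹ * h₂⁻¹) = 1 ∧
        Subgroup.closure ({l₁, l₂, h₁, h₂} : Set G) = ⊤ := by
  rintro ⟨z, l₂, h₁, h₂, hz, hl, hrel, hgen⟩
  obtain rfl : z = l₂ := huniq.unique hz hl
  have hzz : z * z = 1 := by
    have h := pow_orderOf_eq_one z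
    rwa [hz, pow_two] at h
  have hc : ∀ g : G, g * z = z * g := by
    intro g
    have h1 : orderOf (g * z * g⁻¹) = 2 := by
      rw [← hz]
      exact orderOf_injective (MulAut.conj g).toMonoidHom (MulAut.conj g).injective z
    have h2 : g * z * g⁻¹ = z := huniq.unique h1 hz
    exact mul_inv_eq_iff_eq_mul.mp h2
  have hh : h₁ * h₂ = h₂ * h₁ := by
    rw [hzz, one_mul, mul_inv_eq_one, mul_inv_eq_iff_eq_mul] at hrel
    exact hrel
  have hS : ∀ x ∈ ({z, z, h₁, h₂} : Set G), ∀ y ∈ ({z, z, h₁, h₂} : Set G),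
      x * y = y * x := by
    intro x hx y hy
    simp only [Set.mem_insert_iff, Set.mem_singleton_iff] at hx hy
    rcases hx with rfl | rfl | rfl | rfl <;> rcases hy with rfl | rfl | rfl | rfl <;>
      first
        | rfl
        | exact hc _
        | exact (hc _).symm
        | exact hh
        | exact hh.symm
  have hS1 : Subgroup.closure ({z, z, h₁, h₂} : Set G) ≤
      Subgroup.centralizer ({z, z, h₁, h₂} : Set G) := by
    rw [Subgroup.closure_le]
    intro x hx
    exact Subgroup.mem_centralizer_iff.mpr fun y hy => hS y hy x hx
  rw [hgen] at hS1
  apply hna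
  intro a b
  have hS2 : Subgroup.closure ({z, z, h₁, h₂} : Set G) ≤ Subgroup.centralizer {a} := by
    rw [Subgroup.closure_le]
    intro x hx
    refine Subgroup.mem_centralizer_iff.mpr fun y hy => ?_
    rw [Set.mem_singleton_iff.mp hy]
    exact (Subgroup.mem_centralizer_iff.mp (hS1 (Subgroup.mem_top a)) x hx).symm
  rw [hgen] at hS2
  exact Subgroup.mem_centralizer_iff.mp (hS2 (Subgroup.mem_top b)) a rfl
end

section
/- The dicyclic group of order 12, D_{4,3,-1} = ⟨x, y | x⁴ = y³ = 1, x y x⁻¹ = y⁻¹⟩, is not (1 | 2,2)-generated; that is, there do not exist elements ℓ₁, ℓ₂, h₁, h₂ in this group with ℓ₁ and ℓ₂ of order 2, ℓ₁ℓ₂ · h₁h₂h₁⁻¹h₂⁻¹ = 1, and {ℓ₁, ℓ₂, h₁, h₂} generating the group. -/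
/-- The only element of order 2 in the dicyclic group of order 12 is `a 3`. -/
theorem dicyclic12_order_two (l : QuaternionGroup 3) (h : orderOf l = 2) :
    l = QuaternionGroup.a 3 := by
  have key : ∀ g : QuaternionGroup 3, g * g = 1 → g ≠ 1 → g = QuaternionGroup.a 3 := by
    decide
  refine key l ?_ ?_
  · rw [← pow_two, ← h, pow_orderOf_eq_one]
  · rintro rfl
    simp at h

/-- The dicyclic group of order 12 is not `(1 | 2,2)`-generated. -/
theorem dicyclic12_not_one_two_two_generated :
    ¬ ∃ l₁ l₂ h₁ h₂ : QuaternionGroup 3,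
        orderOf l₁ = 2 ∧ orderOf l₂ = 2 ∧
        l₁ * l₂ * (h₁ * h₂ * h₁⁻¹ * h₂⁻¹) = 1 ∧
        Subgroup.closure ({l₁, l₂, h₁, h₂} : Set (QuaternionGroup 3)) = ⊤ := by
  rintro ⟨l₁, l₂, h₁, h₂, o₁, o₂, hrel, hgen⟩
  obtain rfl := dicyclic12_order_two l₁ o₁
  obtain rfl := dicyclic12_order_two l₂ o₂
  have hsq : (QuaternionGroup.a 3 * QuaternionGroup.a 3 : QuaternionGroup 3) = 1 := by decide
  have hc : ∀ g : QuaternionGroup 3, QuaternionGroup.a 3 * g = g * QuaternionGroup.a 3 := by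
    decide
  have hcomm : h₁ * h₂ = h₂ * h₁ := by
    rw [hsq, one_mul, mul_inv_eq_one, mul_inv_eq_iff_eq_mul] at hrel
    exact hrel
  have h1 : Subgroup.closure ({QuaternionGroup.a 3, QuaternionGroup.a 3, h₁, h₂} :
      Set (QuaternionGroup 3)) ≤
      Subgroup.centralizer {QuaternionGroup.a 3, QuaternionGroup.a 3, h₁, h₂} := by
    rw [Subgroup.closure_le]
    intro x hx
    rw [SetLike.mem_coe, Subgroup.mem_centralizer_iff]
    intro y hy
    simp only [Set.mem_insert_iff, Set.mem_singleton_iff] at hx hy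
    rcases hx with rfl | rfl | rfl | rfl <;> rcases hy with rfl | rfl | rfl | rfl <;>
      simp only [hc, hcomm]
  have h2 : Subgroup.closure ({QuaternionGroup.a 3, QuaternionGroup.a 3, h₁, h₂} :
      Set (QuaternionGroup 3)) ≤ Subgroup.center (QuaternionGroup 3) := by
    rw [Subgroup.closure_le]
    intro x hx
    rw [SetLike.mem_coe, Subgroup.mem_center_iff]
    intro g
    have hg : g ∈ Subgroup.closure ({QuaternionGroup.a 3, QuaternionGroup.a 3, h₁, h₂} :
      Set (QuaternionGroup 3)) := by rw [hgen]; trivial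
    exact ((Subgroup.mem_centralizer_iff.mp (h1 hg)) x hx).symm
  rw [hgen] at h2
  have h3 := Subgroup.mem_center_iff.mp (h2 (Subgroup.mem_top (QuaternionGroup.a 1)))
    (QuaternionGroup.xa 0)
  revert h3
  decide
end

section
/- The dicyclic group of order 12, D_{4,3,-1} = ⟨x, y | x⁴ = y³ = 1, x y x⁻¹ = y⁻¹⟩, is not (1 | 2)-generated; that is, there do not exist elements h₁, h₂ generating this group such that the commutator h₁h₂h₁⁻¹h₂⁻¹ has order 2. -/
/-- Every commutator in the dicyclic group of order 12 has cube `1`. -/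
lemma dicyclic12_commutator_cube (g h : QuaternionGroup 3) :
    (g * h * g⁻¹ * h⁻¹) ^ 3 = 1 := by
  have key : ∀ i j : ZMod (2 * 3),
      (QuaternionGroup.a i * .a j * (.a i)⁻¹ * (.a j)⁻¹ : QuaternionGroup 3) ^ 3 = 1 ∧
      (QuaternionGroup.a i * .xa j * (.a i)⁻¹ * (.xa j)⁻¹ : QuaternionGroup 3) ^ 3 = 1 ∧
      (QuaternionGroup.xa i * .a j * (.xa i)⁻¹ * (.a j)⁻¹ : QuaternionGroup 3) ^ 3 = 1 ∧
      (QuaternionGroup.xa i * .xa j * (.xa i)⁻¹ * (.xa j)⁻¹ : QuaternionGroup 3) ^ 3 = 1 := by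
    decide +kernel
  rcases g with i | i <;> rcases h with j | j
  · exact (key i j).1
  · exact (key i j).2.1
  · exact (key i j).2.2.1
  · exact (key i j).2.2.2

/-- The dicyclic group of order 12 is not `(1 | 2)`-generated. -/
theorem dicyclic12_not_one_two_generated :
    ¬ ∃ h₁ h₂ : QuaternionGroup 3,
        Subgroup.closure ({h₁, h₂} : Set (QuaternionGroup 3)) = ⊤ ∧
        orderOf (h₁ * h₂ * h₁⁻¹ * h₂⁻¹) = 2 := by
  rintro ⟨h₁, h₂, -, h⟩
  have h3 := orderOf_dvd_of_pow_eq_one (dicyclic12_commutator_cube h₁ h₂)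
  rw [h] at h3
  omega
end

section
/- The special linear group SL₂(𝔽₃) is not (1 | 2)-generated; that is, there do not exist elements h₁, h₂ generating SL₂(𝔽₃) such that the commutator h₁h₂h₁⁻¹h₂⁻¹ has order 2. -/
abbrev SL23 := Matrix.SpecialLinearGroup (Fin 2) (ZMod 3)

lemma SL23_sq (c : SL23) (h : c * c = 1) : c = 1 ∨ c = -1 := by
  have hd := c.det_coe
  rw [Matrix.det_fin_two] at hd
  have e := fun i j => congrArg (fun m : SL23 => m i j) h
  have e00 := e 0 0
  have e01 := e 0 1
  have e10 := e 1 0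
  have e11 := e 1 1
  simp [Matrix.mul_apply, Fin.sum_univ_two] at e00 e01 e10 e11
  simp only [Matrix.SpecialLinearGroup.ext_iff, Fin.forall_fin_two]
  simp
  generalize c 0 0 = x at *
  generalize c 0 1 = y at *
  generalize c 1 0 = z at *
  generalize c 1 1 = w at *
  clear e h
  revert x y z w
  decide

set_option synthInstance.maxHeartbeats 400000 in
set_option synthInstance.maxSize 100000 in
set_option maxRecDepth 10000 in
lemma SL23_central (h : SL23) (H : ∀ g : SL23, g * h = h * g ∨ g * h = -(h * g)) :
    h = 1 ∨ h = -1 := by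
  have hd := h.det_coe
  rw [Matrix.det_fin_two] at hd
  obtain ⟨t1, ht1⟩ : ∃ t : SL23, (t : Matrix (Fin 2) (Fin 2) (ZMod 3)) = !![1, 1; 0, 1] :=
    ⟨⟨!![1, 1; 0, 1], by simp [Matrix.det_fin_two]⟩, rfl⟩
  have h1 := H t1
  obtain ⟨t2, ht2⟩ : ∃ t : SL23, (t : Matrix (Fin 2) (Fin 2) (ZMod 3)) = !![1, 0; 1, 1] :=
    ⟨⟨!![1, 0; 1, 1], by simp [Matrix.det_fin_two]⟩, rfl⟩
  have h2 := H t2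
  simp only [Matrix.SpecialLinearGroup.ext_iff, Fin.forall_fin_two] at h1 h2 ⊢
  simp only [Matrix.SpecialLinearGroup.coe_neg, Matrix.SpecialLinearGroup.coe_mul,
    Matrix.neg_apply, ht1, ht2, Matrix.mul_apply, Fin.sum_univ_two] at h1 h2
  simp at h1 h2 ⊢
  generalize h 0 0 = x at *
  generalize h 0 1 = y at *
  generalize h 1 0 = z at *
  generalize h 1 1 = w at *
  clear H ht1 ht2
  revert x y z w
  decide

/-- `SL₂(𝔽₃)` is not `(1 | 2)`-generated. -/
theorem SL2F3_not_one_two_generated :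
    ¬ ∃ h₁ h₂ : Matrix.SpecialLinearGroup (Fin 2) (ZMod 3),
        Subgroup.closure
          ({h₁, h₂} : Set (Matrix.SpecialLinearGroup (Fin 2) (ZMod 3))) = ⊤ ∧
        orderOf (h₁ * h₂ * h₁⁻¹ * h₂⁻¹) = 2 := by
  rintro ⟨a, b, hcl, ho⟩
  have hsq := pow_orderOf_eq_one (a * b * a⁻¹ * b⁻¹)
  rw [ho, pow_two] at hsq
  have hne : a * b * a⁻¹ * b⁻¹ ≠ 1 := by
    intro h
    rw [h, orderOf_one] at ho
    omega
  have hc := (SL23_sq _ hsq).resolve_left hne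
  have hab : b * a = -(a * b) := by
    have : a * b = -(b * a) := by
      calc a * b = (a * b * a⁻¹ * b⁻¹) * (b * a) := by group
        _ = _ := by rw [hc, neg_one_mul]
    rw [this, neg_neg]
  have H : ∀ g : SL23, g * a = a * g ∨ g * a = -(a * g) := by
    intro g
    have hg : g ∈ Subgroup.closure ({a, b} : Set SL23) := by rw [hcl]; trivial
    induction hg using Subgroup.closure_induction with
    | mem x hx =>
      rcases hx with rfl | rfl
      · exact Or.inl rfl
      · exact Or.inr hab
    | one => left; simp
    | mul x y _ _ hx hy =>
      rcases hx with hx | hx <;> rcases hy with hy | hy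
      · left; rw [mul_assoc, hy, ← mul_assoc, hx, mul_assoc]
      · right; rw [mul_assoc, hy, mul_neg, ← mul_assoc, hx, mul_assoc]
      · right; rw [mul_assoc, hy, ← mul_assoc, hx, neg_mul, mul_assoc]
      · left; rw [mul_assoc, hy, mul_neg, ← mul_assoc, hx, neg_mul, neg_neg, mul_assoc]
    | inv x _ hx =>
      rcases hx with hx | hx
      · left; rw [inv_mul_eq_iff_eq_mul, ← mul_assoc, hx, mul_inv_cancel_right]
      · right
        rw [inv_mul_eq_iff_eq_mul, mul_neg, ← mul_assoc, hx, neg_mul, neg_neg,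
          mul_inv_cancel_right]
  apply hne
  rcases SL23_central a H with h | h
  · subst h; simp
  · have : a * b = b * a := by rw [h, neg_one_mul, mul_neg_one]
    rw [this]; group
end

section
/- The general linear group GL₂(𝔽₃) of invertible 2×2 matrices over the field with 3 elements is not (1 | 2)-generated; that is, there do not exist elements h₁, h₂ generating GL₂(𝔽₃) such that the commutator h₁h₂h₁⁻¹h₂⁻¹ has order 2. -/
lemma aux_sq : ∀ a b c d : ZMod 3, a * d - b * c = 1 → a * a + b * c = 1 → a * b + b * d = 0 →
    c * a + d * c = 0 → c * b + d * d = 1 →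
    b = 0 ∧ c = 0 ∧ ((a = 1 ∧ d = 1) ∨ (a = -1 ∧ d = -1)) := by decide

lemma aux_sq_mat (M : Matrix (Fin 2) (Fin 2) (ZMod 3)) (hd : M.det = 1) (h : M * M = 1) :
    M = 1 ∨ M = -1 := by
  have e := fun i j => congrFun (congrFun h i) j
  have h00 := e 0 0
  have h01 := e 0 1
  have h10 := e 1 0
  have h11 := e 1 1
  simp [Matrix.mul_apply, Fin.sum_univ_two] at h00 h01 h10 h11
  rw [Matrix.det_fin_two] at hd
  obtain ⟨hb, hc, ⟨ha, hd⟩ | ⟨ha, hd⟩⟩ := aux_sq _ _ _ _ hd h00 h01 h10 h11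
  · left; ext i j; fin_cases i <;> fin_cases j <;> simp [*]
  · right; ext i j; fin_cases i <;> fin_cases j <;> simp [*]

lemma aux_U (M N : Matrix (Fin 2) (Fin 2) (ZMod 3)) (hN : N * N * N = 1) (h : M * N = -(N * M)) :
    M = 0 := by
  have h3 : M * (N * N * N) = -((N * N * N) * M) := by
    have e1 : M * (N * N * N) = (M * N) * N * N := by simp only [mul_assoc]
    have e2 : N * M * N = -(N * N * M) := by rw [mul_assoc, h, mul_neg, mul_assoc]
    have e3 : N * N * M * N = -(N * N * N * M) := by
      rw [mul_assoc, h, mul_neg, mul_assoc (N * N) N M]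
    rw [e1, h, neg_mul, e2, neg_neg, e3]
  rw [hN, mul_one, one_mul] at h3
  have key : ∀ x : ZMod 3, x = -x → x = 0 := by decide
  ext i j
  exact key _ (congrFun (congrFun h3 i) j)

/-- `GL₂(𝔽₃)` is not `(1 | 2)`-generated. -/
theorem GL2F3_not_one_two_generated :
    ¬ ∃ h₁ h₂ : Matrix.GeneralLinearGroup (Fin 2) (ZMod 3),
        Subgroup.closure
          ({h₁, h₂} : Set (Matrix.GeneralLinearGroup (Fin 2) (ZMod 3))) = ⊤ ∧
        orderOf (h₁ * h₂ * h₁⁻¹ * h₂⁻¹) = 2 := by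
  rintro ⟨x, y, hgen, ho⟩
  set c := x * y * x⁻¹ * y⁻¹ with hc
  have hc1 : c ≠ 1 := by
    intro h
    rw [h, orderOf_one] at ho
    omega
  have hc2 : c * c = 1 := by
    have h := pow_orderOf_eq_one c
    rwa [ho, pow_two] at h
  have hdet : (c : Matrix (Fin 2) (Fin 2) (ZMod 3)).det = 1 := by
    have : Matrix.GeneralLinearGroup.det c = 1 := by
      rw [hc]
      simp only [map_mul, map_inv]
      rw [mul_comm (Matrix.GeneralLinearGroup.det x)]
      simp
    simpa using congrArg Units.val this
  have hcm : c = -1 := by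
    rcases aux_sq_mat _ hdet (by simpa using congrArg Units.val hc2) with h | h
    · exact absurd (Units.ext h) hc1
    · exact Units.ext (by simpa using h)
  have hxy : x * y = -(y * x) := by
    have : x * y = c * (y * x) := by rw [hc]; group
    rw [this, hcm]; simp
  have hall : ∀ g : Matrix.GeneralLinearGroup (Fin 2) (ZMod 3),
      x * g = g * x ∨ x * g = -(g * x) := by
    intro g
    have hg : g ∈ Subgroup.closure
      ({x, y} : Set (Matrix.GeneralLinearGroup (Fin 2) (ZMod 3))) := by rw [hgen]; trivial
    induction hg using Subgroup.closure_induction with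
    | mem g hg =>
      rcases hg with rfl | rfl
      · left; rfl
      · right; exact hxy
    | one => left; simp
    | mul a b _ _ ha hb =>
      rcases ha with ha | ha <;> rcases hb with hb | hb
      · left; rw [← mul_assoc, ha, mul_assoc, hb, mul_assoc]
      · right; rw [← mul_assoc, ha, mul_assoc, hb, mul_neg, mul_assoc]
      · right; rw [← mul_assoc, ha, neg_mul, mul_assoc, hb, mul_assoc]
      · left; rw [← mul_assoc, ha, neg_mul, mul_assoc, hb, mul_neg, neg_neg, mul_assoc]
    | inv a _ ha =>
      rcases ha with ha | ha
      · left
        rw [mul_inv_eq_iff_eq_mul, mul_assoc, ha, inv_mul_cancel_left]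
      · right
        rw [mul_inv_eq_iff_eq_mul, neg_mul, mul_assoc, ha, mul_neg, neg_neg, inv_mul_cancel_left]
  have hx0 : (x : Matrix (Fin 2) (Fin 2) (ZMod 3)) ≠ 0 := x.ne_zero
  have hcomm : ∀ N : Matrix (Fin 2) (Fin 2) (ZMod 3), N * N * N = 1 →
      (x : Matrix (Fin 2) (Fin 2) (ZMod 3)) * N = N * x := by
    intro N hN
    rcases hall ⟨N, N * N, by rw [← mul_assoc, hN], hN⟩ with h | h
    · simpa using congrArg Units.val h
    · exact absurd (aux_U _ N hN (by simpa using congrArg Units.val h)) hx0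
  have hU := hcomm !![1, 1; 0, 1] (by decide)
  have hL := hcomm !![1, 0; 1, 1] (by decide)
  have u00 := congrFun (congrFun hU 0) 0
  have u01 := congrFun (congrFun hU 0) 1
  have l00 := congrFun (congrFun hL 0) 0
  simp [Matrix.mul_apply, Fin.sum_univ_two] at u00 u01 l00
  have hcxy : x * y = y * x := by
    apply Units.ext
    ext i j
    fin_cases i <;> fin_cases j <;>
      simp [Matrix.mul_apply, Fin.sum_univ_two] <;> grind
  apply hc1
  rw [hc, hcxy]; group
end

section
/- The symmetric group S₄ on 4 letters is not (1 | 2)-generated; that is, there do not exist permutations h₁, h₂ generating S₄ such that the commutator h₁h₂h₁⁻¹h₂⁻¹ has order 2. -/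
set_option maxRecDepth 100000 in
set_option maxHeartbeats 4000000 in
theorem klein_mul_closed : ∀ x : Equiv.Perm (Fin 4), Equiv.Perm.sign x = 1 ∧ x * x = 1 →
    ∀ y : Equiv.Perm (Fin 4), Equiv.Perm.sign y = 1 ∧ y * y = 1 →
      (x * y) * (x * y) = 1 := by
  decide

/-- The Klein four-group: even permutations squaring to one. -/
def kleinV : Subgroup (Equiv.Perm (Fin 4)) where
  carrier := {x | Equiv.Perm.sign x = 1 ∧ x * x = 1}
  one_mem' := by simp
  mul_mem' := by
    intro a b ha hb
    exact ⟨by rw [map_mul, ha.1, hb.1, one_mul], klein_mul_closed a ha b hb⟩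
  inv_mem' := by
    intro a ha
    exact ⟨by rw [Equiv.Perm.sign_inv, ha.1], by rw [← mul_inv_rev, ha.2, inv_one]⟩

theorem mem_kleinV (x : Equiv.Perm (Fin 4)) :
    x ∈ kleinV ↔ Equiv.Perm.sign x = 1 ∧ x * x = 1 := Iff.rfl

instance kleinV_normal : kleinV.Normal := by
  refine ⟨fun n hn g => ?_⟩
  rw [mem_kleinV] at hn ⊢
  refine ⟨by simp [hn.1], ?_⟩
  calc g * n * g⁻¹ * (g * n * g⁻¹) = g * (n * n) * g⁻¹ := by group
    _ = 1 := by rw [hn.2]; group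

theorem not_comm_kleinV :
    ¬ ((Equiv.swap 0 1 * Equiv.swap 1 2 : Equiv.Perm (Fin 4))⁻¹ *
      (Equiv.swap 1 2 * Equiv.swap 0 1) ∈ kleinV) := by
  rw [mem_kleinV]
  decide

/-- The symmetric group `S₄` is not `(1 | 2)`-generated. -/
theorem S4_not_one_two_generated :
    ¬ ∃ h₁ h₂ : Equiv.Perm (Fin 4),
        Subgroup.closure ({h₁, h₂} : Set (Equiv.Perm (Fin 4))) = ⊤ ∧
        orderOf (h₁ * h₂ * h₁⁻¹ * h₂⁻¹) = 2 := by
  rintro ⟨a, b, hgen, hord⟩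
  have hV : a * b * a⁻¹ * b⁻¹ ∈ kleinV := by
    rw [mem_kleinV]
    constructor
    · simp only [map_mul, Equiv.Perm.sign_inv]
      rcases Int.units_eq_one_or (Equiv.Perm.sign a) with h | h <;>
      rcases Int.units_eq_one_or (Equiv.Perm.sign b) with h' | h' <;> simp [h, h']
    · rw [← pow_two, ← hord, pow_orderOf_eq_one]
  let f := QuotientGroup.mk' kleinV
  have hab : f a * f b = f b * f a := by
    have h : f (a * b * a⁻¹ * b⁻¹) = 1 := (QuotientGroup.eq_one_iff _).2 hV
    simp only [map_mul, map_inv] at h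
    rw [mul_inv_eq_one, mul_inv_eq_iff_eq_mul] at h
    exact h
  have key : ∀ x, f x * f a = f a * f x → f x * f b = f b * f x →
      ∀ g, f x * f g = f g * f x := by
    intro x hxa hxb g
    have hle : Subgroup.closure ({a, b} : Set (Equiv.Perm (Fin 4))) ≤
        (Subgroup.centralizer {f x}).comap f := by
      rw [Subgroup.closure_le]
      rintro y (rfl | rfl)
      · simpa [Subgroup.mem_centralizer_iff] using hxa
      · simpa [Subgroup.mem_centralizer_iff] using hxb
    rw [hgen] at hle
    have := hle (Subgroup.mem_top g)
    simpa [Subgroup.mem_centralizer_iff] using this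
  have ha := key a rfl hab
  have hb := key b hab.symm rfl
  have h := key (Equiv.swap 0 1) (ha _).symm (hb _).symm (Equiv.swap 1 2)
  rw [← map_mul, ← map_mul] at h
  exact not_comm_kleinV (QuotientGroup.eq.1 h)
end

section
/- The group ℤ₂ × S₄ is not (1 | 4)-generated; that is, there do not exist elements h₁, h₂ generating ℤ₂ × S₄ such that the commutator h₁h₂h₁⁻¹h₂⁻¹ has order 4. (Indeed, its derived subgroup is isomorphic to A₄, which contains no element of order 4.) -/
lemma even_perm_pow : ∀ s : Equiv.Perm (Fin 4), Equiv.Perm.sign s = 1 → s ^ 2 = 1 ∨ s ^ 3 = 1 := by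
  decide +kernel

/-- `ℤ₂ × S₄` is not `(1 | 4)`-generated. -/
theorem Z2xS4_not_one_four_generated :
    ¬ ∃ h₁ h₂ : Multiplicative (ZMod 2) × Equiv.Perm (Fin 4),
        Subgroup.closure ({h₁, h₂} : Set (Multiplicative (ZMod 2) × Equiv.Perm (Fin 4))) = ⊤ ∧
        orderOf (h₁ * h₂ * h₁⁻¹ * h₂⁻¹) = 4 := by
  rintro ⟨⟨a, s⟩, ⟨b, t⟩, -, h⟩
  have e : ((a, s) * (b, t) * (a, s)⁻¹ * (b, t)⁻¹ : Multiplicative (ZMod 2) × Equiv.Perm (Fin 4))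
      = (1, s * t * s⁻¹ * t⁻¹) := by
    ext1
    · simp
    · rfl
  rw [e] at h
  have hs : Equiv.Perm.sign (s * t * s⁻¹ * t⁻¹) = 1 := by
    simp only [map_mul, map_inv]
    rw [mul_inv_cancel_comm, mul_inv_cancel]
  rcases even_perm_pow _ hs with h2 | h2
  · have := orderOf_dvd_of_pow_eq_one (x := ((1 : Multiplicative (ZMod 2)), s * t * s⁻¹ * t⁻¹)) (n := 2)
      (by rw [Prod.pow_mk, h2, one_pow]; rfl)
    rw [h] at this
    omega
  · have := orderOf_dvd_of_pow_eq_one (x := ((1 : Multiplicative (ZMod 2)), s * t * s⁻¹ * t⁻¹)) (n := 3)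
      (by rw [Prod.pow_mk, h2, one_pow]; rfl)
    rw [h] at this
    omega
end

section
/- The dihedral group D₈ of order 16 is not (1 | 2)-generated; that is, there do not exist elements h₁, h₂ generating D₈ such that the commutator h₁h₂h₁⁻¹h₂⁻¹ has order 2. -/
/-- The three nontrivial characters of `D₈` with values in `Bool` under `xor`. -/
def d8char (k : Fin 3) : DihedralGroup 8 → Bool
  | .r i => if k = 0 then false else decide (i.val % 2 = 1)
  | .sr i => if k = 0 then true else
      if k = 1 then decide (i.val % 2 = 1) else decide (i.val % 2 = 0)

instance d8forall (p : DihedralGroup 8 → Prop) [DecidablePred p] :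
    Decidable (∀ x, p x) :=
  decidable_of_iff ((∀ i : ZMod 8, p (.r i)) ∧ (∀ i : ZMod 8, p (.sr i)))
    ⟨fun h x => by cases x with
      | r i => exact h.1 i
      | sr i => exact h.2 i, fun h => ⟨fun i => h _, fun i => h _⟩⟩

set_option maxRecDepth 100000 in
set_option maxHeartbeats 4000000 in
theorem d8char_mul : ∀ k : Fin 3, ∀ x y : DihedralGroup 8,
    d8char k (x * y) = xor (d8char k x) (d8char k y) := by decide +kernel

theorem d8char_inv : ∀ k : Fin 3, ∀ x : DihedralGroup 8,
    d8char k x⁻¹ = d8char k x := by decide +kernel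

theorem d8char_surj : ∀ k : Fin 3,
    d8char k (.r 1) = true ∨ d8char k (.sr 0) = true := by decide +kernel

theorem d8char_comm : ∀ x y : DihedralGroup 8,
    (x * y * x⁻¹ * y⁻¹) * (x * y * x⁻¹ * y⁻¹) = 1 →
    ∃ k : Fin 3, d8char k x = false ∧ d8char k y = false := by decide +kernel

/-- The dihedral group `D₈` of order 16 is not `(1 | 2)`-generated. -/
theorem dihedral8_not_one_two_generated :
    ¬ ∃ h₁ h₂ : DihedralGroup 8,
        Subgroup.closure ({h₁, h₂} : Set (DihedralGroup 8)) = ⊤ ∧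
        orderOf (h₁ * h₂ * h₁⁻¹ * h₂⁻¹) = 2 := by
  rintro ⟨x, y, hgen, ho⟩
  have hc := pow_orderOf_eq_one (x * y * x⁻¹ * y⁻¹)
  rw [ho, pow_two] at hc
  obtain ⟨k, hx, hy⟩ := d8char_comm x y hc
  have hall : ∀ z : DihedralGroup 8, d8char k z = false := by
    intro z
    have hz : z ∈ Subgroup.closure ({x, y} : Set (DihedralGroup 8)) := by
      rw [hgen]; trivial
    induction hz using Subgroup.closure_induction with
    | mem w hw =>
      rcases hw with rfl | rfl
      · exact hx
      · exact hy
    | one =>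
      have h := d8char_mul k 1 1
      rw [mul_one, Bool.xor_self] at h
      exact h
    | mul a b _ _ ha hb => rw [d8char_mul, ha, hb]; rfl
    | inv a _ ha => rw [d8char_inv, ha]
  rcases d8char_surj k with h | h <;> simp [hall] at h
end

section
/- The alternating group A₅ on 5 letters is not (1 | 2)-generated; that is, there do not exist even permutations h₁, h₂ generating A₅ such that the commutator h₁h₂h₁⁻¹h₂⁻¹ has order 2. -/
/-- Decimal code of a permutation of `Fin 5`: digit `i` is the image of `i`. -/
def permCode (a : Equiv.Perm (Fin 5)) : ℕ :=
  (a 0).val + (a 1).val * 10 + (a 2).val * 100 + (a 3).val * 1000 + (a 4).val * 10000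

/-- Digit `i` of the code `p`. -/
def digitAt (p i : ℕ) : ℕ := p / 10 ^ i % 10

/-- The codes of all even permutations, each paired with the code of its inverse. -/
def evenTable : List (ℕ × ℕ) :=
  [(43210, 43210), (24310, 32410), (32410, 24310), (34120, 34120), (41320, 42130), (13420, 23140),
   (42130, 41320), (14230, 31240), (21430, 21430), (23140, 13420), (31240, 14230), (12340, 12340),
   (34201, 34201), (42301, 42301), (23401, 23401), (43021, 43102), (4321, 32104), (30421, 24103),
   (24031, 31402), (40231, 41203), (2431, 21304), (32041, 14302), (3241, 13204), (20341, 12403),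
   (43102, 43021), (14302, 32041), (31402, 24031), (34012, 34012), (40312, 42013), (3412, 23014),
   (41032, 41032), (4132, 31024), (10432, 21043), (13042, 13042), (30142, 14023), (1342, 12034),
   (24103, 30421), (41203, 40231), (12403, 20341), (42013, 40312), (4213, 30214), (20413, 20413),
   (14023, 30142), (40123, 40123), (1423, 20134), (21043, 10432), (2143, 10324), (10243, 10243),
   (32104, 4321), (13204, 3241), (21304, 2431), (23014, 3412), (30214, 4213), (2314, 2314),
   (31024, 4132), (3124, 3124), (10324, 2143), (12034, 1342), (20134, 1423), (1234, 1234)]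

/-- The commutator of two coded permutations (with coded inverses), evaluated at `i`. -/
def commAt (s t : ℕ × ℕ) (i : ℕ) : ℕ := digitAt s.1 (digitAt t.1 (digitAt s.2 (digitAt t.2 i)))

/-- The commutator squared fixes `i`. -/
def sqFix (s t : ℕ × ℕ) (i : ℕ) : Bool := Nat.beq (commAt s t (commAt s t i)) i

/-- `i` is a common fixed point. -/
def bothFix (s t : ℕ × ℕ) (i : ℕ) : Bool := Nat.beq (digitAt s.1 i) i && Nat.beq (digitAt t.1 i) i

/-- If the commutator squares to one, it is one or there is a common fixed point. -/
def checkPair (s t : ℕ × ℕ) : Bool :=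
  !(sqFix s t 0 && (sqFix s t 1 && (sqFix s t 2 && (sqFix s t 3 && sqFix s t 4)))) ||
  ((bothFix s t 0 || (bothFix s t 1 || (bothFix s t 2 || (bothFix s t 3 || bothFix s t 4)))) ||
  (Nat.beq (commAt s t 0) 0 && (Nat.beq (commAt s t 1) 1 && (Nat.beq (commAt s t 2) 2 &&
    (Nat.beq (commAt s t 3) 3 && Nat.beq (commAt s t 4) 4)))))

theorem check_all : (evenTable.all fun s => evenTable.all fun t => checkPair s t) = true := by
  decide +kernel

theorem mem_table : ∀ a : alternatingGroup (Fin 5), (permCode a.1, permCode a.1⁻¹) ∈ evenTable := by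
  decide +kernel

theorem ap_enc (a : Equiv.Perm (Fin 5)) (i : Fin 5) : digitAt (permCode a) i.val = (a i).val := by
  have h0 := (a 0).isLt
  have h1 := (a 1).isLt
  have h2 := (a 2).isLt
  have h3 := (a 3).isLt
  have h4 := (a 4).isLt
  fin_cases i <;> simp [digitAt, permCode] <;> omega

theorem commAt_enc (a b : Equiv.Perm (Fin 5)) (i : Fin 5) :
    commAt (permCode a, permCode a⁻¹) (permCode b, permCode b⁻¹) i.val = ((a * b * a⁻¹ * b⁻¹) i).val := by
  simp only [commAt, ap_enc, Equiv.Perm.mul_apply]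

theorem sqFix_enc (a b : Equiv.Perm (Fin 5))
    (h : (a * b * a⁻¹ * b⁻¹) * (a * b * a⁻¹ * b⁻¹) = 1) (i : Fin 5) :
    sqFix (permCode a, permCode a⁻¹) (permCode b, permCode b⁻¹) i.val = true := by
  unfold sqFix
  rw [commAt_enc, commAt_enc, ← Equiv.Perm.mul_apply, h]
  simp

theorem bothFix_enc (a b : Equiv.Perm (Fin 5)) (i : Fin 5)
    (h : bothFix (permCode a, permCode a⁻¹) (permCode b, permCode b⁻¹) i.val = true) : a i = i ∧ b i = i := by
  simpa [bothFix, ap_enc, Fin.ext_iff] using h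

/-- Two even permutations of five letters whose commutator is an involution
have a common fixed point. -/
theorem common_fixed_point (a b : alternatingGroup (Fin 5))
    (hne : a * b * a⁻¹ * b⁻¹ ≠ 1)
    (hsq : (a * b * a⁻¹ * b⁻¹) * (a * b * a⁻¹ * b⁻¹) = 1) :
    ∃ i : Fin 5, a.1 i = i ∧ b.1 i = i := by
  have hc := List.all_eq_true.mp (List.all_eq_true.mp check_all _ (mem_table a)) _ (mem_table b)
  have hs := sqFix_enc a.1 b.1 (congrArg Subtype.val hsq)
  have s0 := hs 0
  have s1 := hs 1
  have s2 := hs 2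
  have s3 := hs 3
  have s4 := hs 4
  simp only [Fin.isValue, Fin.coe_ofNat_eq_mod, Nat.reduceMod] at s0 s1 s2 s3 s4
  simp only [checkPair, s0, s1, s2, s3, s4, Bool.and_self, Bool.not_true, Bool.false_or,
    Bool.or_eq_true, Bool.and_eq_true, Nat.beq_eq] at hc
  rcases hc with (h | h | h | h | h) | ⟨h0, h1, h2, h3, h4⟩
  · exact ⟨0, bothFix_enc _ _ 0 h⟩
  · exact ⟨1, bothFix_enc _ _ 1 h⟩
  · exact ⟨2, bothFix_enc _ _ 2 h⟩
  · exact ⟨3, bothFix_enc _ _ 3 h⟩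
  · exact ⟨4, bothFix_enc _ _ 4 h⟩
  · refine absurd (Subtype.ext (Equiv.ext fun i => Fin.ext ?_)) hne
    refine (commAt_enc a.1 b.1 i).symm.trans ?_
    fin_cases i
    · exact h0
    · exact h1
    · exact h2
    · exact h3
    · exact h4

/-- Every point of `Fin 5` is moved by some even permutation. -/
theorem exists_moved : ∀ i : Fin 5, ∃ g : alternatingGroup (Fin 5), g.1 i ≠ i := by
  decide +kernel

/-- The alternating group `A₅` is not `(1 | 2)`-generated. -/
theorem A5_not_one_two_generated :
    ¬ ∃ h₁ h₂ : alternatingGroup (Fin 5),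
        Subgroup.closure ({h₁, h₂} : Set (alternatingGroup (Fin 5))) = ⊤ ∧
        orderOf (h₁ * h₂ * h₁⁻¹ * h₂⁻¹) = 2 := by
  rintro ⟨a, b, hgen, hord⟩
  obtain ⟨hsq, hne⟩ := orderOf_eq_prime_iff.mp hord
  obtain ⟨i, ha, hb⟩ := common_fixed_point a b hne (by rw [← pow_two]; exact hsq)
  obtain ⟨g, hg⟩ := exists_moved i
  have hle : Subgroup.closure ({a, b} : Set (alternatingGroup (Fin 5))) ≤
      MulAction.stabilizer (alternatingGroup (Fin 5)) i := by
    rw [Subgroup.closure_le]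
    rintro x (rfl | rfl)
    · exact ha
    · exact hb
  rw [hgen] at hle
  exact hg (hle (Subgroup.mem_top g))
end

section
/- The group ℤ₃ × S₄, the direct product of the cyclic group of order 3 with the symmetric group on 4 letters, is not (1 | 2)-generated; that is, there do not exist elements h₁, h₂ generating ℤ₃ × S₄ such that the commutator h₁h₂h₁⁻¹h₂⁻¹ has order 2. -/
/-- Even permutations of four letters with trivial square are closed under products. -/
theorem klein_mul : ∀ u v : Equiv.Perm (Fin 4),
    Equiv.Perm.sign u = 1 → u * u = 1 → Equiv.Perm.sign v = 1 → v * v = 1 →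
    u * v * (u * v) = 1 := by
  set_option maxRecDepth 100000 in
  decide +kernel

theorem sign_comm (x y : Equiv.Perm (Fin 4)) :
    Equiv.Perm.sign (x * y * x⁻¹ * y⁻¹) = 1 := by
  simp only [map_mul, map_inv]
  rw [mul_comm (Equiv.Perm.sign x), mul_inv_cancel_right, mul_inv_cancel]

/-- Commuting with `x` modulo the Klein four-group propagates to generated subgroups. -/
theorem comm_closure (x : Equiv.Perm (Fin 4))
    (s : Set (Multiplicative (ZMod 3) × Equiv.Perm (Fin 4)))
    (hs : Subgroup.closure s = ⊤)
    (h : ∀ y ∈ s, (x * y.2 * x⁻¹ * y.2⁻¹) * (x * y.2 * x⁻¹ * y.2⁻¹) = 1)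
    (z : Equiv.Perm (Fin 4)) : (x * z * x⁻¹ * z⁻¹) * (x * z * x⁻¹ * z⁻¹) = 1 := by
  have key : ∀ w ∈ Subgroup.closure s,
      (x * w.2 * x⁻¹ * w.2⁻¹) * (x * w.2 * x⁻¹ * w.2⁻¹) = 1 := by
    intro w hw
    induction hw using Subgroup.closure_induction with
    | mem y hy => exact h y hy
    | one => simp
    | mul p q _ _ hp hq =>
      have e : x * (p * q).2 * x⁻¹ * (p * q).2⁻¹ =
          (x * p.2 * x⁻¹ * p.2⁻¹) * (p.2 * (x * q.2 * x⁻¹ * q.2⁻¹) * p.2⁻¹) := by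
        simp only [Prod.snd_mul]; group
      rw [e]
      refine klein_mul _ _ (sign_comm _ _) hp ?_ ?_
      · rw [map_mul, map_mul, sign_comm]; simp
      · have e2 : ∀ c d : Equiv.Perm (Fin 4), d * c * d⁻¹ * (d * c * d⁻¹) = d * (c * c) * d⁻¹ := by
          intro c d; group
        rw [e2, hq]; simp
    | inv p _ hp =>
      have e : ∀ y : Equiv.Perm (Fin 4), (x * y⁻¹ * x⁻¹ * y⁻¹⁻¹) * (x * y⁻¹ * x⁻¹ * y⁻¹⁻¹) =
          y⁻¹ * ((x * y * x⁻¹ * y⁻¹) * (x * y * x⁻¹ * y⁻¹))⁻¹ * y := by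
        intro y; group
      rw [Prod.snd_inv, e, hp]; simp
  exact key (1, z) (hs ▸ Subgroup.mem_top _)

theorem comm_symm (x y : Equiv.Perm (Fin 4))
    (h : (x * y * x⁻¹ * y⁻¹) * (x * y * x⁻¹ * y⁻¹) = 1) :
    (y * x * y⁻¹ * x⁻¹) * (y * x * y⁻¹ * x⁻¹) = 1 := by
  have e : (y * x * y⁻¹ * x⁻¹) * (y * x * y⁻¹ * x⁻¹) =
      ((x * y * x⁻¹ * y⁻¹) * (x * y * x⁻¹ * y⁻¹))⁻¹ := by group
  rw [e, h, inv_one]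

/-- `ℤ₃ × S₄` is not `(1 | 2)`-generated. -/
theorem Z3xS4_not_one_two_generated :
    ¬ ∃ h₁ h₂ : Multiplicative (ZMod 3) × Equiv.Perm (Fin 4),
        Subgroup.closure ({h₁, h₂} : Set (Multiplicative (ZMod 3) × Equiv.Perm (Fin 4))) = ⊤ ∧
        orderOf (h₁ * h₂ * h₁⁻¹ * h₂⁻¹) = 2 := by
  rintro ⟨a, b, hs, ho⟩
  have h0 := pow_orderOf_eq_one (a * b * a⁻¹ * b⁻¹)
  rw [ho, pow_two] at h0
  have hab : (a.2 * b.2 * a.2⁻¹ * b.2⁻¹) * (a.2 * b.2 * a.2⁻¹ * b.2⁻¹) = 1 :=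
    congrArg Prod.snd h0
  have ha := comm_closure a.2 _ hs (by
    rintro y (rfl | rfl)
    · simp
    · exact hab)
  have hb := comm_closure b.2 _ hs (by
    rintro y (rfl | rfl)
    · exact comm_symm _ _ hab
    · simp)
  have hall := fun x => comm_closure x _ hs (by
    rintro y (rfl | rfl)
    · exact comm_symm _ _ (ha x)
    · exact comm_symm _ _ (hb x))
  exact absurd (hall (Equiv.swap 0 1) (Equiv.swap 1 2)) (by decide)
end
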